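/- arXiv:2605.20974 — 4 statements merged into one kernel-verified Lean document; each statement's English description precedes it below -/
import Mathlib

section
/- Let M be a cancellative commutative monoid. Then M is an FFM if and only if M is a BFM and an LFFM. -/
/-- The set of factorizations of `b` in `M`: multisets of irreducible elements of
`Associates M` whose product is the class of `b`. -/
def ZM {M : Type*} [CancelCommMonoid M] (b : M) : Set (Multiset (Associates M)) :=
  {z | (∀ a ∈ z, Irreducible a) ∧ z.prod = Associates.mk b}

/-- The set of length-`ℓ` factorizations of `b` in `M`. -/
def ZMLen {M : Type*} [CancelCommMonoid M] (b : M) (ℓ : ℕ) : Set (Multiset (Associates M)) :=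
  {z ∈ ZM b | Multiset.card z = ℓ}

/-- The set of lengths of factorizations of `b` in `M`. -/
def LM {M : Type*} [CancelCommMonoid M] (b : M) : Set ℕ :=
  {n | ∃ z ∈ ZM b, Multiset.card z = n}

/-- `M` is atomic if every element has a factorization. -/
def Atomic (M : Type*) [CancelCommMonoid M] : Prop :=
  ∀ b : M, (ZM b).Nonempty

/-- `M` is a bounded factorization monoid. -/
def IsBFM (M : Type*) [CancelCommMonoid M] : Prop :=
  ∀ b : M, (LM b).Nonempty ∧ (LM b).Finite

/-- `M` is a length-finite factorization monoid: atomic with all fixed-length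
fibers finite. -/
def IsLFFM (M : Type*) [CancelCommMonoid M] : Prop :=
  Atomic M ∧ ∀ (b : M) (ℓ : ℕ), (ZMLen b ℓ).Finite

/-- `M` is a finite factorization monoid. -/
def IsFFM (M : Type*) [CancelCommMonoid M] : Prop :=
  ∀ b : M, (ZM b).Nonempty ∧ (ZM b).Finite

/-- A cancellative commutative monoid is an FFM iff it is a BFM and an LFFM. -/
theorem isFFM_iff_isBFM_and_isLFFM (M : Type*) [CancelCommMonoid M] :
    IsFFM M ↔ IsBFM M ∧ IsLFFM M := by
  constructor
  · intro h
    refine ⟨fun b => ⟨?_, ?_⟩, fun b => (h b).1, fun b l => (h b).2.subset fun z hz => hz.1⟩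
    · obtain ⟨z, hz⟩ := (h b).1
      exact ⟨_, z, hz, rfl⟩
    · exact (h b).2.image Multiset.card
  · rintro ⟨hB, hA, hL⟩ b
    refine ⟨hA b, ((hB b).2.biUnion fun l _ => hL b l).subset fun z hz => ?_⟩
    exact Set.mem_biUnion (show Multiset.card z ∈ LM b from ⟨z, hz, rfl⟩) ⟨hz, rfl⟩
end

section
/- Let M be a cancellative commutative monoid. If M is a BFM and M is not an FFM, then there exist b ∈ M and ℓ ∈ ℕ such that the set Z_{M,ℓ}(b) of length-ℓ factorizations of b is infinite; moreover such a b is not a unit of M. -/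
/-- If `M` is a BFM that is not an FFM, then some element `b`, which is not a unit,
has an infinite set of length-`ℓ` factorizations for some `ℓ`. -/
theorem exists_infinite_fixed_length_fiber (M : Type*) [CancelCommMonoid M]
    (hBFM : IsBFM M) (hnFFM : ¬ IsFFM M) :
    ∃ b : M, ∃ ℓ : ℕ, (ZMLen b ℓ).Infinite ∧ ¬ IsUnit b := by
  by_contra hcon
  apply hnFFM
  intro b
  obtain ⟨⟨n, z, hz, hn⟩, hfin⟩ := hBFM b
  refine ⟨⟨z, hz⟩, ?_⟩
  by_cases hb : IsUnit b
  · refine (Set.finite_singleton (0 : Multiset (Associates M))).subset ?_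
    rintro w ⟨hw, hp⟩
    rw [Set.mem_singleton_iff]
    refine Multiset.eq_zero_of_forall_notMem fun a ha => (hw a ha).not_isUnit ?_
    refine isUnit_of_dvd_unit (Multiset.dvd_prod ha) ?_
    rw [hp]
    exact Associates.isUnit_mk.2 hb
  · refine (hfin.biUnion (t := fun l => ZMLen b l) ?_).subset ?_
    · intro l _
      by_contra hinf
      exact hcon ⟨b, l, hinf, hb⟩
    · intro w hw
      exact Set.mem_biUnion (show Multiset.card w ∈ LM b from ⟨w, hw, rfl⟩) ⟨hw, rfl⟩
end

section
/- Let G be a commutative group, N ≤ G a submonoid, b ∈ N, ℓ ∈ ℕ, and Ω ⊆ Z_{N,ℓ}(b). Let (S_i)_{i ∈ Λ} be a nonempty family of Ω-admissible submonoids of G containing N that forms a chain under the order ≼ (S₁ ≼ S₂ iff S₁ ≤ S₂ and every element of S₁ that is a unit of ↥S₂ is a unit of ↥S₁). Then the union S = ⋃_{i} S_i is an Ω-admissible submonoid over N and S_i ≼ S for every i ∈ Λ. -/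
/-- The set of factorizations of `b` in the submonoid `S` of the group `G`. -/
def ZSet {G : Type*} [CommGroup G] (S : Submonoid G) (b : S) :
    Set (Multiset (Associates S)) :=
  {z | (∀ a ∈ z, Irreducible a) ∧ z.prod = Associates.mk b}

/-- The set of length-`ℓ` factorizations of `b` in `S`. -/
def ZSetLen {G : Type*} [CommGroup G] (S : Submonoid G) (b : S) (ℓ : ℕ) :
    Set (Multiset (Associates S)) :=
  {z ∈ ZSet S b | Multiset.card z = ℓ}

/-- `u` is a unit of the submonoid `S` of the group `G`: `u⁻¹ ∈ S`. -/
def IsUnitIn {G : Type*} [CommGroup G] (S : Submonoid G) (u : G) : Prop :=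
  u⁻¹ ∈ S

/-- `S` is unit-reflecting over `N`. -/
def UnitReflecting {G : Type*} [CommGroup G] (N S : Submonoid G) : Prop :=
  ∀ u ∈ S, IsUnitIn S u → ∀ x ∈ N, ∀ y ∈ N, u * y = x → u ∈ N ∧ IsUnitIn N u

/-- `S` is `Ω`-admissible over `N`: `N ≤ S`, `S` is unit-reflecting over `N`, and
every `a ∈ N` whose class in `Associates ↥N` occurs in some `z ∈ Ω` has irreducible
class in `Associates ↥S`. -/
def OmegaAdmissible {G : Type*} [CommGroup G] (N S : Submonoid G)
    (Ω : Set (Multiset (Associates N))) : Prop :=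
  N ≤ S ∧ UnitReflecting N S ∧
    ∀ (a : G) (haN : a ∈ N) (haS : a ∈ S),
      (∃ z ∈ Ω, Associates.mk (⟨a, haN⟩ : N) ∈ z) →
        Irreducible (Associates.mk (⟨a, haS⟩ : S))

/-- The survival order: `S₁ ≼ S₂` iff `S₁ ≤ S₂` and every element of `S₁` that is a
unit of `↥S₂` is a unit of `↥S₁`. -/
def Prec {G : Type*} [CommGroup G] (S₁ S₂ : Submonoid G) : Prop :=
  S₁ ≤ S₂ ∧ ∀ u ∈ S₁, IsUnitIn S₂ u → IsUnitIn S₁ u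

theorem isUnit_sub_iff {G : Type*} [CommGroup G] (S : Submonoid G) (u : G) (hu : u ∈ S) :
    IsUnit (⟨u, hu⟩ : S) ↔ u⁻¹ ∈ S := by
  rw [isUnit_iff_exists_inv]
  constructor
  · rintro ⟨⟨v, hv⟩, h⟩
    have h' : u * v = 1 := congrArg Subtype.val h
    rwa [← eq_inv_of_mul_eq_one_right h']
  · intro h
    exact ⟨⟨u⁻¹, h⟩, Subtype.ext (mul_inv_cancel u)⟩

theorem irred_mk_iff {M : Type*} [CommMonoid M] {a : M} :
    Irreducible (Associates.mk a) ↔ Irreducible a := by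
  simp only [irreducible_iff, Associates.isUnit_mk, Associates.forall_associated,
    Associates.mk_mul_mk, Associates.mk_eq_mk_iff_associated, Associated.comm (x := a)]
  apply Iff.rfl.and
  constructor
  · rintro h x y rfl
    exact h _ _ (Associated.refl _)
  · rintro h x y ⟨u, rfl⟩
    have := h (mul_assoc x y u)
    simpa using this

theorem irred_sub_iff {G : Type*} [CommGroup G] (S : Submonoid G) (a : G) (ha : a ∈ S) :
    Irreducible (Associates.mk (⟨a, ha⟩ : S)) ↔
      a⁻¹ ∉ S ∧ ∀ x ∈ S, ∀ y ∈ S, a = x * y → x⁻¹ ∈ S ∨ y⁻¹ ∈ S := by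
  rw [irred_mk_iff]
  rw [irreducible_iff, isUnit_sub_iff]
  refine and_congr_right fun _ => ⟨fun h x hx y hy e => ?_, ?_⟩
  · have := h (a := ⟨x, hx⟩) (b := ⟨y, hy⟩) (Subtype.ext e)
    rwa [isUnit_sub_iff, isUnit_sub_iff] at this
  · rintro h ⟨x, hx⟩ ⟨y, hy⟩ e
    rw [isUnit_sub_iff, isUnit_sub_iff]
    exact h x hx y hy (congrArg Subtype.val e)

/-- Chain unions: the union of a nonempty `Prec`-chain of `Ω`-admissible submonoids
over `N` is an `Ω`-admissible submonoid over `N` and a `Prec`-upper bound. -/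
theorem chain_union {G : Type*} [CommGroup G] (N : Submonoid G) (b : G) (hb : b ∈ N)
    (ℓ : ℕ) (Ω : Set (Multiset (Associates N))) (hΩ : Ω ⊆ ZSetLen N ⟨b, hb⟩ ℓ)
    {ι : Type*} [Nonempty ι] (S : ι → Submonoid G)
    (hadm : ∀ i, OmegaAdmissible N (S i) Ω)
    (hchain : ∀ i j, Prec (S i) (S j) ∨ Prec (S j) (S i)) :
    ∃ T : Submonoid G, (T : Set G) = ⋃ i, (S i : Set G) ∧
      OmegaAdmissible N T Ω ∧ ∀ i, Prec (S i) T := by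
  have hdir : Directed (· ≤ ·) S := by
    intro i j
    rcases hchain i j with h | h
    · exact ⟨j, h.1, le_refl _⟩
    · exact ⟨i, le_refl _, h.1⟩
  have hmem : ∀ x, x ∈ iSup S ↔ ∃ i, x ∈ S i := fun x =>
    Submonoid.mem_iSup_of_directed hdir
  have hprec : ∀ i, Prec (S i) (iSup S) := by
    intro i
    refine ⟨le_iSup S i, fun u hu hinv => ?_⟩
    obtain ⟨j, hj⟩ := (hmem _).1 hinv
    rcases hchain i j with h | h
    · exact h.2 u hu hj
    · exact h.1 hj
  refine ⟨iSup S, Submonoid.coe_iSup_of_directed hdir, ⟨?_, ?_, ?_⟩, hprec⟩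
  · obtain ⟨i⟩ := ‹Nonempty ι›
    exact (hadm i).1.trans (le_iSup S i)
  · intro u hu hinv x hx y hy e
    obtain ⟨i, hi⟩ := (hmem _).1 hu
    exact (hadm i).2.1 u hi ((hprec i).2 u hi hinv) x hx y hy e
  · intro a haN haS hz
    have hirr := fun i => (irred_sub_iff (S i) a ((hadm i).1 haN)).1
      ((hadm i).2.2 a haN ((hadm i).1 haN) hz)
    rw [irred_sub_iff]
    refine ⟨fun h => ?_, fun x hx y hy e => ?_⟩
    · obtain ⟨i, hi⟩ := (hmem _).1 h
      exact (hirr i).1 hi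
    · obtain ⟨i, hi⟩ := (hmem _).1 hx
      obtain ⟨j, hj⟩ := (hmem _).1 hy
      obtain ⟨k, hik, hjk⟩ := hdir i j
      exact ((hirr k).2 x (hik hi) y (hjk hj) e).imp
        (fun h => le_iSup S k h) (fun h => le_iSup S k h)
end

section
/- Let G be a commutative group, S ≤ G a submonoid, and b ∈ S with b⁻¹ ∉ S (b is not a unit of ↥S). Let u ∈ G satisfy condition (i) or condition (ii), set w = b^2 * u and S' = S ⊔ Submonoid.powers w. Then an element of S' is a unit of ↥S' if and only if it lies in S and is a unit of ↥S; moreover w is not a unit of ↥S'. -/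
/-- No new units: if `b ∈ S` is not a unit of `↥S` and `u` satisfies condition (i)
(`u^{n₀} ∈ S` for some `n₀ ≥ 1`) or condition (ii) (`u^n * q ≠ 1` for all `n ≥ 1`,
`q ∈ S`), then with `w = b^2 * u` and `S' = S ⊔ powers w`, an element of `S'` is a
unit of `↥S'` iff it lies in `S` and is a unit of `↥S`; moreover `w` is not a unit
of `↥S'`. -/
theorem no_new_units {G : Type*} [CommGroup G] (S : Submonoid G) (b : G)
    (hb : b ∈ S) (hbu : b⁻¹ ∉ S) (u : G)
    (hcond : (∃ n₀ : ℕ, 1 ≤ n₀ ∧ u ^ n₀ ∈ S) ∨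
      (∀ n : ℕ, 1 ≤ n → ∀ q ∈ S, u ^ n * q ≠ 1)) :
    (∀ x ∈ S ⊔ Submonoid.powers (b ^ 2 * u),
        (IsUnitIn (S ⊔ Submonoid.powers (b ^ 2 * u)) x ↔ x ∈ S ∧ IsUnitIn S x)) ∧
    ¬ IsUnitIn (S ⊔ Submonoid.powers (b ^ 2 * u)) (b ^ 2 * u) := by
  have key : ∀ n : ℕ, 1 ≤ n → ∀ s ∈ S, (b ^ 2 * u) ^ n * s ≠ 1 := by
    intro n hn s hs h
    rcases hcond with ⟨m, hm, hum⟩ | h2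
    · apply hbu
      obtain ⟨k, hk⟩ : ∃ k, 2 * (n * m) = k + 1 :=
        ⟨2 * (n * m) - 1, by have := Nat.mul_pos hn hm; omega⟩
      have e : b * (b ^ k * (u ^ m) ^ n * s ^ m) = 1 := by
        calc b * (b ^ k * (u ^ m) ^ n * s ^ m)
            = b ^ (k + 1) * (u ^ m) ^ n * s ^ m := by rw [pow_succ']; simp only [mul_assoc]
          _ = ((b ^ 2 * u) ^ n * s) ^ m := by
            rw [← hk, mul_pow, mul_pow, mul_pow, ← pow_mul, ← pow_mul, ← pow_mul, ← pow_mul,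
              mul_comm m n]
          _ = 1 := by rw [h, one_pow]
      rw [inv_eq_of_mul_eq_one_right e]
      exact S.mul_mem (S.mul_mem (S.pow_mem hb _) (S.pow_mem hum _)) (S.pow_mem hs _)
    · apply h2 n hn ((b ^ 2) ^ n * s) (S.mul_mem (S.pow_mem (S.pow_mem hb _) _) hs)
      rw [← h, mul_pow, ← mul_assoc, mul_comm (u ^ n)]
  generalize b ^ 2 * u = w at key
  unfold IsUnitIn
  refine ⟨fun x hx => ⟨fun hi => ?_, fun h => Submonoid.mem_sup_left h.2⟩, fun hi => ?_⟩
  · obtain ⟨s, hs, _, ⟨k, rfl⟩, rfl⟩ := Submonoid.mem_sup.1 hx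
    obtain ⟨t, ht, _, ⟨l, rfl⟩, e⟩ := Submonoid.mem_sup.1 hi
    simp only at e hx hi ⊢
    have h1 : w ^ (k + l) * (s * t) = 1 := by
      have : (s * w ^ k) * (t * w ^ l) = 1 := by rw [e, mul_inv_cancel]
      rw [← this, pow_add, mul_comm, mul_mul_mul_comm]
    have h0 : k + l = 0 := by
      by_contra h0
      exact key (k + l) (by omega) _ (S.mul_mem hs ht) h1
    obtain ⟨rfl, rfl⟩ : k = 0 ∧ l = 0 := by omega
    simp only [pow_zero, mul_one] at e ⊢
    exact ⟨hs, e ▸ ht⟩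
  · obtain ⟨t, ht, _, ⟨l, rfl⟩, e⟩ := Submonoid.mem_sup.1 hi
    simp only at e
    apply key (l + 1) (by omega) t ht
    rw [pow_succ, mul_assoc, mul_comm, mul_assoc, e, mul_inv_cancel]
end
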